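/- Let A be an abelian category with enough projectives. The assignment M ↦ Fac M is a bijection from the set of support τ-tilting subcategories M of A to the set of subcategories S satisfying S = Fac P(S) such that every projective object admits a left P(S)-approximation. -/

import Mathlib

open CategoryTheory Limits Opposite

noncomputable section

universe v u

variable {C : Type u} [Category.{v} C] [Abelian C] [EnoughProjectives C]

attribute [local instance] CategoryTheory.Abelian.hasFiniteBiproducts

/-- `Fac M`: quotients of finite direct sums of objects of `M`. -/
def Fac (M : Set C) : Set C :=
  {X | ∃ (n : ℕ) (f : Fin n → C), (∀ i, f i ∈ M) ∧
    haveI : HasBiproductsOfShape (Fin n) C := HasFiniteBiproducts.out n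
    ∃ e : (⨁ f) ⟶ X, Epi e}

/-- Vanishing of `Ext¹(X, Y)`. -/
def ext1Zero (X Y : C) : Prop := Subsingleton (((Ext ℤ C 1).obj (op X)).obj Y)

/-- Vanishing of `Ext²(X, Y)`. -/
def ext2Zero (X Y : C) : Prop := Subsingleton (((Ext ℤ C 2).obj (op X)).obj Y)

/-- `v : P ⟶ V₀` is a left `M`-approximation. -/
def IsLeftApprox (M : Set C) {P V₀ : C} (v : P ⟶ V₀) : Prop :=
  ∀ V' ∈ M, ∀ h : P ⟶ V', ∃ t : V₀ ⟶ V', v ≫ t = h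

/-- `u : U₀ ⟶ X` is a right `M`-approximation. -/
def IsRightApprox (M : Set C) {U₀ X : C} (u : U₀ ⟶ X) : Prop :=
  ∀ M' ∈ M, ∀ h : M' ⟶ X, ∃ t : M' ⟶ U₀, t ≫ u = h

/-- The Ext-projective objects of `S`. -/
def ExtProj (S : Set C) : Set C := {D ∈ S | ∀ Z ∈ S, ext1Zero D Z}

/-- `M` is τ-rigid: `Ext¹(M, Fac M) = 0`. -/
def TauRigid (M : Set C) : Prop := ∀ M₀ ∈ M, ∀ X ∈ Fac M, ext1Zero M₀ X

/-- `P` admits an exact sequence `P ⟶ Ma ⟶ Mb ⟶ 0` with `Ma, Mb ∈ M` and the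
first map a left `M`-approximation. -/
def HasApproxSeq (M : Set C) (P : C) : Prop :=
  ∃ M₀ ∈ M, ∃ M₁ ∈ M, ∃ (m : P ⟶ M₀) (g : M₀ ⟶ M₁) (w : m ≫ g = 0),
    (ShortComplex.mk m g w).Exact ∧ Epi g ∧ IsLeftApprox M m

/-- `M` is a support τ-tilting subcategory. -/
def SupportTauTilting (M : Set C) : Prop :=
  TauRigid M ∧ ∀ P : C, Projective P → HasApproxSeq M P

/-- `0 ⟶ X ⟶ Y ⟶ Z ⟶ 0` is a short exact sequence. -/
def SES {X Y Z : C} (f : X ⟶ Y) (g : Y ⟶ Z) : Prop :=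
  ∃ w : f ≫ g = 0, (ShortComplex.mk f g w).Exact ∧ Mono f ∧ Epi g

/-- `U` is hereditary: `Ext²(U, −) = 0`. -/
def Hereditary1 (U : Set C) : Prop := ∀ U₀ ∈ U, ∀ X : C, ext2Zero U₀ X

/-- `U` is partial tilting. -/
def PartialTilting (U : Set C) : Prop :=
  Hereditary1 U ∧ ∀ U₀ ∈ U, ∀ U₁ ∈ U, ext1Zero U₀ U₁

/-- `U` is tilting. -/
def Tilting (U : Set C) : Prop :=
  PartialTilting U ∧ ∀ P : C, Projective P →
    ∃ Ua ∈ U, ∃ Ub ∈ U, ∃ (i : P ⟶ Ua) (p : Ua ⟶ Ub), SES i p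

/-- `U^⊥₁ = {X | Ext¹(U, X) = 0}`. -/
def Perp1 (U : Set C) : Set C := {X | ∀ U₀ ∈ U, ext1Zero U₀ X}

/-- `M` is closed under finite direct sums and direct summands. -/
def AdditivelyClosed (M : Set C) : Prop :=
  (∀ (n : ℕ) (f : Fin n → C), (∀ i, f i ∈ M) →
    haveI : HasBiproductsOfShape (Fin n) C := HasFiniteBiproducts.out n
    (⨁ f) ∈ M) ∧
  (∀ M₀ ∈ M, ∀ (X : C) (r : M₀ ⟶ X) (s : X ⟶ M₀), s ≫ r = 𝟙 X → X ∈ M)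

/-- The additive closure of a class of objects: direct summands of finite
direct sums of its objects. -/
def AddClosure (X : Set C) : Set C :=
  {Y | ∃ (n : ℕ) (f : Fin n → C), (∀ i, f i ∈ X) ∧
    haveI : HasBiproductsOfShape (Fin n) C := HasFiniteBiproducts.out n
    ∃ (r : (⨁ f) ⟶ Y) (s : Y ⟶ ⨁ f), s ≫ r = 𝟙 Y}

/-- Cocycle description of the vanishing of `Ext¹`. -/
lemma ext1Zero_iff_cocycle {X : C} (P : ProjectiveResolution X) (Y : C) :
    ext1Zero X Y ↔ ∀ f : P.complex.X 1 ⟶ Y, P.complex.d 2 1 ≫ f = 0 →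
      ∃ g : P.complex.X 0 ⟶ Y, P.complex.d 1 0 ≫ g = f := by
  unfold ext1Zero
  rw [← ModuleCat.isZero_iff_subsingleton, (P.isoExt (R := ℤ) 1 Y).isZero_iff,
    ← HomologicalComplex.exactAt_iff_isZero_homology,
    HomologicalComplex.exactAt_iff' _ 0 1 2 (by simp) (by simp),
    ShortComplex.moduleCat_exact_iff]
  exact Iff.rfl

/-- Lifting form of the vanishing of `Ext¹`. -/
def LiftCrit (X Y : C) : Prop :=
  ∀ ⦃E Z : C⦄ (i : Y ⟶ E) (q : E ⟶ Z) (w : i ≫ q = 0),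
    (ShortComplex.mk i q w).Exact → Mono i → Epi q → ∀ h : X ⟶ Z, ∃ s : X ⟶ E, s ≫ q = h

lemma liftCrit_of_ext1Zero {X Y : C} (hXY : ext1Zero X Y) : LiftCrit X Y := by
  intro E Z i q w hex hi hq h
  let P := ProjectiveResolution.of X
  have hc := (ext1Zero_iff_cocycle P Y).1 hXY
  let π : P.complex.X 0 ⟶ X := P.π.f 0
  have hdπ : P.complex.d 1 0 ≫ π = 0 := P.complex_d_comp_π_f_zero
  haveI : Epi π := inferInstanceAs (Epi (P.π.f 0))
  let h0 : P.complex.X 0 ⟶ E := Projective.factorThru (π ≫ h) q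
  have hh0 : h0 ≫ q = π ≫ h := Projective.factorThru_comp _ _
  have hk : (P.complex.d 1 0 ≫ h0) ≫ q = 0 := by
    rw [Category.assoc, hh0, ← Category.assoc, hdπ, zero_comp]
  obtain ⟨h1, hh1⟩ : ∃ h1 : P.complex.X 1 ⟶ Y, h1 ≫ i = P.complex.d 1 0 ≫ h0 :=
    ⟨hex.lift _ hk, hex.lift_f _ hk⟩
  obtain ⟨g0, hg0⟩ := hc h1 (by
    rw [← cancel_mono i, Category.assoc, hh1, ← Category.assoc, P.complex.d_comp_d, zero_comp,
      zero_comp])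
  have hz : P.complex.d 1 0 ≫ (h0 - g0 ≫ i) = 0 := by
    rw [Preadditive.comp_sub, ← Category.assoc, hg0, hh1, sub_self]
  obtain ⟨s, hs⟩ : ∃ s : X ⟶ E, π ≫ s = h0 - g0 ≫ i :=
    ⟨P.exact₀.desc _ hz, P.exact₀.g_desc _ hz⟩
  refine ⟨s, ?_⟩
  rw [← cancel_epi π, ← Category.assoc, hs, Preadditive.sub_comp, Category.assoc, w, comp_zero,
    sub_zero, hh0]

/-- Extension form. -/
lemma LiftCrit.extend {X Y : C} (hXY : LiftCrit X Y) {A B : C} (i : A ⟶ B) (q : B ⟶ X)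
    (w : i ≫ q = 0) (hex : (ShortComplex.mk i q w).Exact) (hi : Mono i) (hq : Epi q)
    (f : A ⟶ Y) : ∃ g : B ⟶ Y, i ≫ g = f := by
  let a : Y ⟶ pushout f i := pushout.inl f i
  let b : B ⟶ pushout f i := pushout.inr f i
  have hab : f ≫ a = i ≫ b := pushout.condition
  haveI : Mono a := inferInstanceAs (Mono (pushout.inl f i))
  obtain ⟨r, har, hbr⟩ : ∃ r : pushout f i ⟶ X, a ≫ r = 0 ∧ b ≫ r = q :=
    ⟨pushout.desc 0 q (by simp [w]), pushout.inl_desc _ _ _, pushout.inr_desc _ _ _⟩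
  haveI : Epi r := by
    haveI : Epi (b ≫ r) := by rw [hbr]; exact hq
    exact epi_of_epi b r
  have hex' : (ShortComplex.mk a r har).Exact := by
    apply ShortComplex.exact_of_g_is_cokernel
    refine CokernelCofork.IsColimit.ofπ' r har (fun {T} k hk => ?_)
    have hbk : i ≫ (b ≫ k) = 0 := by
      rw [← Category.assoc, ← hab, Category.assoc, hk, comp_zero]
    refine ⟨hex.desc _ hbk, ?_⟩
    apply pushout.hom_ext
    · change a ≫ r ≫ _ = a ≫ k
      rw [hk, ← Category.assoc, har, zero_comp]
    · change b ≫ r ≫ _ = b ≫ k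
      rw [← Category.assoc, hbr]
      exact hex.g_desc _ hbk
  obtain ⟨s, hs⟩ := hXY a r har hex' inferInstance inferInstance (𝟙 X)
  have hz : (b - q ≫ s) ≫ r = 0 := by
    rw [Preadditive.sub_comp, Category.assoc, hs, hbr, Category.comp_id, sub_self]
  refine ⟨hex'.lift _ hz, ?_⟩
  rw [← cancel_mono a, Category.assoc]
  have : hex'.lift _ hz ≫ a = b - q ≫ s := hex'.lift_f _ hz
  rw [this, Preadditive.comp_sub, ← Category.assoc i q s, w, zero_comp, sub_zero, hab]

lemma LiftCrit.ext1Zero {X Y : C} (hXY : LiftCrit X Y) : ext1Zero X Y := by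
  let P := ProjectiveResolution.of X
  rw [ext1Zero_iff_cocycle P Y]
  intro f hf
  let π : P.complex.X 0 ⟶ X := P.π.f 0
  have hdπ : P.complex.d 1 0 ≫ π = 0 := P.complex_d_comp_π_f_zero
  haveI : Epi π := inferInstanceAs (Epi (P.π.f 0))
  let e : P.complex.X 1 ⟶ kernel π := kernel.lift π _ hdπ
  have he : e ≫ kernel.ι π = P.complex.d 1 0 := kernel.lift_ι _ _ _
  haveI : Epi e := (ShortComplex.exact_iff_epi_kernel_lift _).1 P.exact₀
  have hze : P.complex.d 2 1 ≫ e = 0 := by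
    rw [← cancel_mono (kernel.ι π), Category.assoc, he, P.complex.d_comp_d, zero_comp]
  have hexe : (ShortComplex.mk _ e hze).Exact := by
    have h1 := P.exact_succ 0
    rw [ShortComplex.exact_iff_exact_up_to_refinements] at h1 ⊢
    intro A x hx
    refine h1 x ?_
    change x ≫ P.complex.d 1 0 = 0
    change x ≫ e = 0 at hx
    rw [← he, ← Category.assoc, hx, zero_comp]
  obtain ⟨f', hf'⟩ : ∃ f' : kernel π ⟶ Y, e ≫ f' = f := ⟨hexe.desc _ hf, hexe.g_desc _ hf⟩
  obtain ⟨g, hg⟩ := hXY.extend (kernel.ι π) π (kernel.condition π)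
    (ShortComplex.exact_of_f_is_kernel _ (kernelIsKernel π)) inferInstance inferInstance f'
  exact ⟨g, by rw [← he, Category.assoc, hg, hf']⟩

lemma ext1Zero_iff {X Y : C} : ext1Zero X Y ↔ LiftCrit X Y :=
  ⟨liftCrit_of_ext1Zero, LiftCrit.ext1Zero⟩

lemma LiftCrit.retract {X X' Y : C} (h : LiftCrit X Y) (r : X ⟶ X') (s : X' ⟶ X)
    (hsr : s ≫ r = 𝟙 X') : LiftCrit X' Y := by
  intro E Z i q w hex hi hq k
  obtain ⟨t, ht⟩ := h i q w hex hi hq (r ≫ k)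
  exact ⟨s ≫ t, by rw [Category.assoc, ht, ← Category.assoc, hsr, Category.id_comp]⟩

lemma LiftCrit.biprod {n : ℕ} {f : Fin n → C} {Y : C} (h : ∀ i, LiftCrit (f i) Y) :
    LiftCrit (⨁ f) Y := by
  intro E Z i q w hex hi hq k
  choose t ht using fun j => h j i q w hex hi hq (biproduct.ι f j ≫ k)
  refine ⟨biproduct.desc t, ?_⟩
  apply biproduct.hom_ext'
  intro j
  rw [← Category.assoc, biproduct.ι_desc, ht]

lemma fac_of_epi {M : Set C} {X Y : C} (hX : X ∈ Fac M) (e : X ⟶ Y) [Epi e] : Y ∈ Fac M := by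
  obtain ⟨n, f, hf, p, hp⟩ := hX
  exact ⟨n, f, hf, p ≫ e, epi_comp _ _⟩

lemma subset_fac {M : Set C} {X : C} (hX : X ∈ M) : X ∈ Fac M := by
  refine ⟨1, fun _ => X, fun _ => hX, biproduct.π (fun _ : Fin 1 => X) 0, inferInstance⟩

lemma fac_biprod {M : Set C} {n : ℕ} {f : Fin n → C} (h : ∀ i, f i ∈ Fac M) :
    (⨁ f) ∈ Fac M := by
  choose m g hg e he using h
  let σ : Fin (Fintype.card (Σ i, Fin (m i))) ≃ (Σ i, Fin (m i)) := (Fintype.equivFin _).symm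
  refine ⟨_, fun k => g (σ k).1 (σ k).2, fun k => hg _ _,
    biproduct.desc (fun k => biproduct.ι (g (σ k).1) (σ k).2 ≫ e (σ k).1 ≫
      biproduct.ι f (σ k).1), ?_⟩
  rw [Preadditive.epi_iff_cancel_zero]
  intro T t ht
  apply biproduct.hom_ext'
  intro i
  haveI := he i
  rw [← cancel_epi (e i)]
  apply biproduct.hom_ext'
  intro j
  have key : ∀ x : Σ i, Fin (m i),
      biproduct.ι (g x.1) x.2 ≫ e x.1 ≫ biproduct.ι f x.1 ≫ t = 0 := by
    intro x
    obtain ⟨k, rfl⟩ := σ.surjective x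
    have := congrArg (fun z => biproduct.ι (fun k => g (σ k).1 (σ k).2) k ≫ z) ht
    simpa using this
  simpa using key ⟨i, j⟩

lemma exists_epi_of_fac {M : Set C} (hM : AdditivelyClosed M) {X : C} (hX : X ∈ Fac M) :
    ∃ N ∈ M, ∃ e : N ⟶ X, Epi e := by
  obtain ⟨n, f, hf, e, he⟩ := hX
  exact ⟨_, hM.1 n f hf, e, he⟩

lemma approx_fac {M : Set C} (hM : AdditivelyClosed M) {P N X : C} (hP : Projective P)
    {m : P ⟶ N} (hm : IsLeftApprox M m) (hX : X ∈ Fac M) (h : P ⟶ X) :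
    ∃ t : N ⟶ X, m ≫ t = h := by
  obtain ⟨N', hN', e, he⟩ := exists_epi_of_fac hM hX
  obtain ⟨t, ht⟩ := hm N' hN' (Projective.factorThru h e)
  exact ⟨t ≫ e, by rw [← Category.assoc, ht, Projective.factorThru_comp]⟩

lemma retract_sum_mem {M : Set C} (hM : AdditivelyClosed M) {A B D : C} (hA : A ∈ M) (hB : B ∈ M)
    (a : D ⟶ A) (b : D ⟶ B) (a' : A ⟶ D) (b' : B ⟶ D) (h : a ≫ a' + b ≫ b' = 𝟙 D) : D ∈ M := by
  let f : Fin 2 → C := ![A, B]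
  have hf : ∀ i, f i ∈ M := by
    intro i; fin_cases i
    · exact hA
    · exact hB
  let a0 : D ⟶ f 0 := a
  let b0 : D ⟶ f 1 := b
  let a1 : f 0 ⟶ D := a'
  let b1 : f 1 ⟶ D := b'
  have h' : a0 ≫ a1 + b0 ≫ b1 = 𝟙 D := h
  refine hM.2 _ (hM.1 2 f hf) D (biproduct.π f 0 ≫ a1 + biproduct.π f 1 ≫ b1)
    (a0 ≫ biproduct.ι f 0 + b0 ≫ biproduct.ι f 1) ?_
  have h01 : biproduct.ι f 0 ≫ biproduct.π f 1 = 0 := biproduct.ι_π_ne f (by decide)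
  have h10 : biproduct.ι f 1 ≫ biproduct.π f 0 = 0 := biproduct.ι_π_ne f (by decide)
  simp only [Preadditive.add_comp, Preadditive.comp_add, Category.assoc]
  rw [← Category.assoc (biproduct.ι f 0) (biproduct.π f 0),
    ← Category.assoc (biproduct.ι f 0) (biproduct.π f 1),
    ← Category.assoc (biproduct.ι f 1) (biproduct.π f 0),
    ← Category.assoc (biproduct.ι f 1) (biproduct.π f 1), h01, h10,
    biproduct.ι_π_self, biproduct.ι_π_self]
  simpa using h'

/-- Ext-projectives of `Fac M` lie in `M`. -/
lemma extProj_fac_subset {M : Set C} (hM : AdditivelyClosed M) (hS : SupportTauTilting M)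
    {D : C} (hD : D ∈ ExtProj (Fac M)) : D ∈ M := by
  obtain ⟨hDF, hDE⟩ := hD
  let p : Projective.over D ⟶ D := Projective.π D
  haveI hpe : Epi p := inferInstanceAs (Epi (Projective.π D))
  have hPp : Projective (Projective.over D) := inferInstance
  obtain ⟨M₀, hM₀, M₁, hM₁, m, gM, wM, hexM, hgM, hm⟩ := hS.2 _ hPp
  obtain ⟨t, ht⟩ := approx_fac hM hPp hm hDF p
  let ω : kernel p ⟶ Projective.over D := kernel.ι p
  have hωp : ω ≫ p = 0 := kernel.condition p
  have hexω : (ShortComplex.mk ω p hωp).Exact :=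
    ShortComplex.exact_of_f_is_kernel _ (kernelIsKernel p)
  let q : Projective.over (kernel p) ⟶ kernel p := Projective.π _
  haveI hqe : Epi q := inferInstanceAs (Epi (Projective.π _))
  have hQp : Projective (Projective.over (kernel p)) := inferInstance
  obtain ⟨N₀, hN₀, N₁, hN₁, n, gN, wN, hexN, hgN, hn⟩ := hS.2 _ hQp
  obtain ⟨y, hy⟩ := hn M₀ hM₀ (q ≫ ω ≫ m)
  let F := pushout n q
  let γ : N₀ ⟶ F := pushout.inl n q
  let β : kernel p ⟶ F := pushout.inr n q
  have hγβ : n ≫ γ = q ≫ β := pushout.condition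
  haveI : Epi γ := inferInstanceAs (Epi (pushout.inl n q))
  have hF : F ∈ Fac M := fac_of_epi (subset_fac hN₀) γ
  obtain ⟨φ, hγφ, hβφ⟩ : ∃ φ : F ⟶ M₀, γ ≫ φ = y ∧ β ≫ φ = ω ≫ m :=
    ⟨pushout.desc y (ω ≫ m) hy, pushout.inl_desc _ _ _, pushout.inr_desc _ _ _⟩
  obtain ⟨ν, hγν, hβν⟩ : ∃ ν : F ⟶ N₁, γ ≫ ν = gN ∧ β ≫ ν = 0 :=
    ⟨pushout.desc gN 0 (by rw [wN, comp_zero]), pushout.inl_desc _ _ _, pushout.inr_desc _ _ _⟩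
  obtain ⟨j', hj'⟩ := (liftCrit_of_ext1Zero (hDE F hF)).extend ω p hωp hexω inferInstance hpe β
  obtain ⟨j, hj⟩ := approx_fac hM hPp hm hF j'
  have hωj : ω ≫ m ≫ j = β := by rw [hj, hj']
  have h1 : ω ≫ (m - m ≫ j ≫ φ) = 0 := by
    have : ω ≫ m ≫ j ≫ φ = ω ≫ m := by
      rw [← hβφ, ← hωj]; simp only [Category.assoc]
    rw [Preadditive.comp_sub, this, sub_self]
  obtain ⟨r, hr⟩ : ∃ r : D ⟶ M₀, p ≫ r = m - m ≫ j ≫ φ :=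
    ⟨hexω.desc _ h1, hexω.g_desc _ h1⟩
  have h2 : ω ≫ (m ≫ j ≫ ν) = 0 := by
    have : ω ≫ m ≫ j ≫ ν = β ≫ ν := by
      rw [← hωj]; simp only [Category.assoc]
    rw [this, hβν]
  obtain ⟨d, hd⟩ : ∃ d : D ⟶ N₁, p ≫ d = m ≫ j ≫ ν :=
    ⟨hexω.desc _ h2, hexω.g_desc _ h2⟩
  have h3 : n ≫ (y ≫ t) = 0 := by
    rw [← Category.assoc, hy]; simp only [Category.assoc]; rw [ht, hωp, comp_zero]
  obtain ⟨s, hs⟩ : ∃ s : N₁ ⟶ D, gN ≫ s = y ≫ t := ⟨hexN.desc _ h3, hexN.g_desc _ h3⟩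
  have hνs : ν ≫ s = φ ≫ t := by
    rw [← cancel_epi γ, ← Category.assoc, hγν, hs, ← Category.assoc, hγφ]
  refine retract_sum_mem hM hM₀ hN₁ r d t s ?_
  rw [← cancel_epi p, Preadditive.comp_add, ← Category.assoc p r t, hr, ← Category.assoc p d s, hd]
  simp only [Preadditive.sub_comp, Category.assoc, hνs, ht, sub_add_cancel, Category.comp_id]

lemma extProj_fac_eq {M : Set C} (hM : AdditivelyClosed M) (hS : SupportTauTilting M) :
    ExtProj (Fac M) = M :=
  Set.Subset.antisymm (fun _ hD => extProj_fac_subset hM hS hD)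
    (fun _ hD => ⟨subset_fac hD, fun Z hZ => hS.1 _ hD Z hZ⟩)

lemma extProj_additivelyClosed {S : Set C} (hS : S = Fac (ExtProj S)) :
    AdditivelyClosed (ExtProj S) := by
  constructor
  · intro n f hf
    refine ⟨?_, fun Z hZ => LiftCrit.ext1Zero
      (LiftCrit.biprod fun i => liftCrit_of_ext1Zero ((hf i).2 Z hZ))⟩
    rw [hS]
    exact fac_biprod fun i => subset_fac (hf i)
  · intro M₀ hM₀ X r s hsr
    refine ⟨?_, fun Z hZ => LiftCrit.ext1Zero
      ((liftCrit_of_ext1Zero (hM₀.2 Z hZ)).retract r s hsr)⟩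
    haveI : Epi r := by
      haveI : Epi (s ≫ r) := by rw [hsr]; infer_instance
      exact epi_of_epi s r
    rw [hS]
    exact fac_of_epi (subset_fac hM₀) r

lemma extProj_supportTauTilting {S : Set C} (hS : S = Fac (ExtProj S))
    (h : ∀ P : C, Projective P → ∃ D ∈ ExtProj S, ∃ m : P ⟶ D, IsLeftApprox (ExtProj S) m) :
    SupportTauTilting (ExtProj S) := by
  refine ⟨fun M₀ hM₀ X hX => hM₀.2 X (by rw [hS]; exact hX), fun P hP => ?_⟩
  obtain ⟨D, hD, m, hm⟩ := h P hP
  have hadd := extProj_additivelyClosed hS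
  let g : D ⟶ cokernel m := cokernel.π m
  have w : m ≫ g = 0 := cokernel.condition m
  have hexm : (ShortComplex.mk m g w).Exact :=
    ShortComplex.exact_of_g_is_cokernel _ (cokernelIsCokernel m)
  haveI hg : Epi g := inferInstanceAs (Epi (cokernel.π m))
  refine ⟨D, hD, cokernel m, ⟨?_, fun Z hZ => LiftCrit.ext1Zero ?_⟩, m, g, w, hexm, hg, hm⟩
  · rw [hS]
    exact fac_of_epi (subset_fac hD) g
  · intro E W i q wi hex hi hq k
    obtain ⟨a, ha⟩ := liftCrit_of_ext1Zero (hD.2 Z hZ) i q wi hex hi hq (g ≫ k)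
    have hz : (m ≫ a) ≫ q = 0 := by
      rw [Category.assoc, ha, ← Category.assoc, w, zero_comp]
    obtain ⟨b, hb⟩ : ∃ b : P ⟶ Z, b ≫ i = m ≫ a := ⟨hex.lift _ hz, hex.lift_f _ hz⟩
    obtain ⟨c, hc⟩ := approx_fac hadd hP hm (hS ▸ hZ : Z ∈ Fac (ExtProj S)) b
    have h1 : m ≫ (a - c ≫ i) = 0 := by
      rw [Preadditive.comp_sub, ← Category.assoc, hc, hb, sub_self]
    obtain ⟨s, hs⟩ : ∃ s : cokernel m ⟶ E, g ≫ s = a - c ≫ i :=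
      ⟨hexm.desc _ h1, hexm.g_desc _ h1⟩
    refine ⟨s, ?_⟩
    rw [← cancel_epi g, ← Category.assoc, hs, Preadditive.sub_comp, Category.assoc, wi, comp_zero,
      sub_zero, ha]

theorem stmt6 :
    Set.BijOn (fun M : Set C => Fac M)
      {M | AdditivelyClosed M ∧ SupportTauTilting M}
      {S | S = Fac (ExtProj S) ∧
        ∀ P : C, Projective P → ∃ D ∈ ExtProj S, ∃ m : P ⟶ D,
          IsLeftApprox (ExtProj S) m} := by
  refine ⟨?_, ?_, ?_⟩
  · rintro M ⟨hM, hS⟩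
    have h := extProj_fac_eq hM hS
    refine ⟨?_, fun P hP => ?_⟩
    · change Fac M = Fac (ExtProj (Fac M))
      rw [h]
    · change ∃ D ∈ ExtProj (Fac M), ∃ m : P ⟶ D, IsLeftApprox (ExtProj (Fac M)) m
      rw [h]
      obtain ⟨M₀, hM₀, _, _, m, _, _, _, _, hm⟩ := hS.2 P hP
      exact ⟨M₀, hM₀, m, hm⟩
  · rintro M ⟨hM, hS⟩ M' ⟨hM', hS'⟩ hEq
    have hEq' : Fac M = Fac M' := hEq
    rw [← extProj_fac_eq hM hS, hEq', extProj_fac_eq hM' hS']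
  · rintro S ⟨hS, h⟩
    exact ⟨ExtProj S, ⟨extProj_additivelyClosed hS, extProj_supportTauTilting hS h⟩, hS.symm⟩
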